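/- arXiv:1010.3743 — 2 statements merged into one kernel-verified Lean document; each statement's English description precedes it below -/
import Mathlib

section
/- Let ω be a holomorphic 1-form and ψ a holomorphic p-form on a connected open subset U of C^ℓ with ω ∧ ψ = 0. Then every irreducible component of V(ω) \ V(ψ) has codimension at most p in C^ℓ, where V(η) denotes the zero locus of the form η on U. -/
open Filter Topology in
/-- A function on a complex disc whose Laplacian at the centre is positive, presented as
`Re h + ε ∑ |x + s v|² - M ∑ |f|²` with `f' (0) = 0`, has no local maximum at the centre. -/
theorem not_isLocalMax_re_add_normSq_sub {ι κ : Type*} [Fintype ι] [Fintype κ]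
    {h : ℂ → ℂ} {f : ι → ℂ → ℂ} {x v : κ → ℂ} {ε M : ℝ} (hε : 0 < ε) (hv : v ≠ 0)
    (hh : ∀ᶠ s in 𝓝 0, DifferentiableAt ℂ h s)
    (hf : ∀ i, ∀ᶠ s in 𝓝 0, DifferentiableAt ℂ (f i) s)
    (hf0 : ∀ i, HasDerivAt (f i) 0 0) :
    ¬ IsLocalMax (fun s : ℂ => (h s).re + ε * ∑ j, Complex.normSq (x j + s * v j) -
      M * ∑ i, Complex.normSq (f i s)) 0 := by
  intro hmax
  obtain ⟨V, hVdef⟩ : ∃ V, V = ∑ j, Complex.normSq (v j) := ⟨_, rfl⟩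
  have hV : 0 < V := by
    obtain ⟨j, hj⟩ := Function.ne_iff.1 hv
    rw [hVdef]
    exact Finset.sum_pos' (fun _ _ => Complex.normSq_nonneg _)
      ⟨j, Finset.mem_univ _, Complex.normSq_pos.2 hj⟩
  set k : ℂ → ℂ := fun s => (h s - h 0) + 2 * ε * ∑ j, (starRingEnd ℂ) (x j) * v j * s -
    2 * M * ∑ i, (starRingEnd ℂ) (f i 0) * (f i s - f i 0) with hk
  have hkd : ∀ᶠ s in 𝓝 0, DifferentiableAt ℂ k s := by
    filter_upwards [hh, eventually_all.2 hf] with s h1 h2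
    rw [hk]
    fun_prop
  have hk0 : k 0 = 0 := by simp [hk]
  have hsmall : ∀ᶠ s in 𝓝 (0 : ℂ),
      M * ∑ i, Complex.normSq (f i s - f i 0) ≤ ε * V / 2 * Complex.normSq s := by
    have h1 : (fun s : ℂ => M * ∑ i, Complex.normSq (f i s - f i 0)) =o[𝓝 0]
        fun s => ‖s‖ ^ 2 := by
      refine Asymptotics.IsLittleO.const_mul_left (Asymptotics.IsLittleO.fun_sum fun i _ => ?_) _
      have := (hf0 i).isLittleO
      simp only [smul_zero, sub_zero] at this
      simpa [Complex.normSq_eq_norm_sq] using this.norm_norm.pow (n := 2) two_pos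
    filter_upwards [h1.bound (show 0 < ε * V / 2 by positivity)] with s hs
    rw [Complex.normSq_eq_norm_sq]
    refine (le_abs_self _).trans ?_
    simpa using hs
  have hre : ∀ᶠ s in 𝓝 (0 : ℂ), (k s).re ≤ -(ε * V / 2 * Complex.normSq s) := by
    filter_upwards [hmax, hsmall] with s h1 h2
    have e1 : ∑ j, Complex.normSq (x j + s * v j) = ∑ j, Complex.normSq (x j) +
        Complex.normSq s * V + 2 * (∑ j, (starRingEnd ℂ) (x j) * v j * s).re := by
      rw [hVdef, Complex.re_sum, Finset.mul_sum, Finset.mul_sum, ← Finset.sum_add_distrib,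
        ← Finset.sum_add_distrib]
      refine Finset.sum_congr rfl fun j _ => ?_
      simp [Complex.normSq_apply]
      ring
    have e2 : ∑ i, Complex.normSq (f i s) = ∑ i, Complex.normSq (f i 0) +
        ∑ i, Complex.normSq (f i s - f i 0) +
          2 * (∑ i, (starRingEnd ℂ) (f i 0) * (f i s - f i 0)).re := by
      rw [Complex.re_sum, Finset.mul_sum, ← Finset.sum_add_distrib, ← Finset.sum_add_distrib]
      refine Finset.sum_congr rfl fun j _ => ?_
      simp [Complex.normSq_apply]
      ring
    have e3 : (k s).re = (h s).re - (h 0).re +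
        2 * ε * (∑ j, (starRingEnd ℂ) (x j) * v j * s).re -
        2 * M * (∑ i, (starRingEnd ℂ) (f i 0) * (f i s - f i 0)).re := by
      have r1 : (2 * ε : ℂ) = ((2 * ε : ℝ) : ℂ) := by push_cast; rfl
      have r2 : (2 * M : ℂ) = ((2 * M : ℝ) : ℂ) := by push_cast; rfl
      simp only [hk, r1, r2, Complex.sub_re, Complex.add_re, Complex.re_ofReal_mul]
    simp only [e1, e2, zero_mul, add_zero] at h1
    rw [e3]
    nlinarith
  have hkn : ∀ s, ‖Complex.exp (k s)‖ = Real.exp (k s).re := fun s => Complex.norm_exp _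
  have hloc : IsLocalMax (norm ∘ fun s => Complex.exp (k s)) 0 := by
    filter_upwards [hre] with s hs
    rw [Function.comp, Function.comp, hkn, hkn, hk0, Complex.zero_re]
    refine Real.exp_le_exp.2 (hs.trans ?_)
    have := Complex.normSq_nonneg s
    simp only [Left.neg_nonpos_iff]
    positivity
  have hconst := Complex.eventually_eq_of_isLocalMax_norm
    (f := fun s => Complex.exp (k s)) (c := 0) (hkd.mono fun s hs => hs.cexp) hloc
  have hzero : ∀ᶠ s in 𝓝 (0 : ℂ), s = 0 := by
    filter_upwards [hconst, hre] with s h1 h2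
    have h3 := congrArg norm h1
    rw [hkn, hkn, Real.exp_eq_exp, hk0, Complex.zero_re] at h3
    rw [h3] at h2
    have h4 := Complex.normSq_nonneg s
    have h5 : 0 < ε * V / 2 := by positivity
    exact Complex.normSq_eq_zero.1 (by nlinarith)
  obtain ⟨s, h1, h2⟩ := ((hzero.filter_mono nhdsWithin_le_nhds).and
    (self_mem_nhdsWithin : {(0:ℂ)}ᶜ ∈ 𝓝[≠] (0:ℂ))).exists
  exact h2 h1

open Filter Topology in
/-- Maximum principle on the common zero set of fewer than `ℓ` holomorphic functions in `ℓ`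
variables: the real part of a holomorphic function has no strict peak away from the frontier. -/
theorem exists_mem_frontier_re_le {ι κ : Type*} [Fintype ι] [Fintype κ]
    (hcard : Fintype.card ι < Fintype.card κ) {K : Set (κ → ℂ)} (hK : IsCompact K)
    {h : (κ → ℂ) → ℂ} {f : ι → (κ → ℂ) → ℂ}
    (hh : ∀ x ∈ K, DifferentiableAt ℂ h x) (hf : ∀ i, ∀ x ∈ K, DifferentiableAt ℂ (f i) x)
    {x₁ : κ → ℂ} (hx₁ : x₁ ∈ K) (hfx₁ : ∀ i, f i x₁ = 0) :
    ∃ x ∈ K, x ∉ interior K ∧ (∀ i, f i x = 0) ∧ (h x₁).re ≤ (h x).re := by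
  by_contra! hcon
  set S : Set (κ → ℂ) := K \ interior K with hS
  have hSc : IsCompact S := hK.diff isOpen_interior
  have hhc : ContinuousOn (fun x => (h x).re) K := fun x hx =>
    (Complex.continuous_re.continuousAt.comp (hh x hx).continuousAt).continuousWithinAt
  set q : (κ → ℂ) → ℝ := fun x => ∑ i, Complex.normSq (f i x) with hq
  have hqc : ContinuousOn q K := by
    refine continuousOn_finsetSum _ fun i _ x hx => ?_
    exact (Complex.continuous_normSq.continuousAt.comp
      (hf i x hx).continuousAt).continuousWithinAt
  have hq0 : ∀ x, 0 ≤ q x := fun x => Finset.sum_nonneg fun _ _ => Complex.normSq_nonneg _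
  have hqz : ∀ x, q x = 0 → ∀ i, f i x = 0 := fun x hx i => by
    rw [hq, Finset.sum_eq_zero_iff_of_nonneg fun _ _ => Complex.normSq_nonneg _] at hx
    exact Complex.normSq_eq_zero.1 (hx i (Finset.mem_univ _))
  set r : (κ → ℂ) → ℝ := fun x => ∑ j, Complex.normSq (x j) with hr
  have hrc : Continuous r := continuous_finsetSum _ fun j _ =>
    Complex.continuous_normSq.comp (continuous_apply j)
  have hr0 : ∀ x, 0 ≤ r x := fun x => Finset.sum_nonneg fun _ _ => Complex.normSq_nonneg _
  obtain ⟨R, hR0, hR⟩ : ∃ R, 0 < R ∧ ∀ x ∈ K, r x ≤ R := by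
    obtain ⟨y, -, hy⟩ := hK.exists_isMaxOn ⟨x₁, hx₁⟩ hrc.continuousOn
    exact ⟨r y + 1, by linarith [hr0 y], fun x hx => by linarith [isMaxOn_iff.1 hy x hx]⟩
  -- choice of `ε`
  obtain ⟨ε, hε, hεS⟩ : ∃ ε : ℝ, 0 < ε ∧ ∀ x ∈ S, q x = 0 →
      (h x).re + ε * r x < (h x₁).re + ε * r x₁ := by
    set Z : Set (κ → ℂ) := S ∩ q ⁻¹' {0} with hZ
    have hZc : IsCompact Z := hSc.of_isClosed_subset
      ((hqc.mono Set.sdiff_subset).preimage_isClosed_of_isClosed hSc.isClosed isClosed_singleton)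
      Set.inter_subset_left
    rcases Z.eq_empty_or_nonempty with hZe | hZn
    · refine ⟨1, one_pos, fun x hx hqx => ?_⟩
      exact absurd (show x ∈ Z from ⟨hx, hqx⟩) (by simp [hZe])
    · obtain ⟨y, hy, hym⟩ := hZc.exists_isMaxOn hZn
        (hhc.mono (Set.inter_subset_left.trans Set.sdiff_subset))
      have hlt := hcon y hy.1.1 hy.1.2 (hqz y hy.2)
      refine ⟨((h x₁).re - (h y).re) / (2 * R), div_pos (by linarith) (by linarith),
        fun x hx hqx => ?_⟩
      have h1 : (h x).re ≤ (h y).re := isMaxOn_iff.1 hym x ⟨hx, hqx⟩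
      have h2 := hR x hx.1
      have h3 : ((h x₁).re - (h y).re) / (2 * R) * r x ≤
          ((h x₁).re - (h y).re) / (2 * R) * R :=
        mul_le_mul_of_nonneg_left h2 (div_nonneg (by linarith) (by linarith))
      have h4 : ((h x₁).re - (h y).re) / (2 * R) * R = ((h x₁).re - (h y).re) / 2 := by
        field_simp
      have h5 : 0 ≤ ((h x₁).re - (h y).re) / (2 * R) * r x₁ :=
        mul_nonneg (div_nonneg (by linarith) (by linarith)) (hr0 _)
      linarith
  set g : (κ → ℂ) → ℝ := fun x => (h x).re + ε * r x with hg
  have hgc : ContinuousOn g K := hhc.add (hrc.continuousOn.const_mul ε |>.mono fun _ _ => trivial)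
  -- choice of `M`
  obtain ⟨M, hMS⟩ : ∃ M : ℝ, ∀ x ∈ S, g x - M * q x < g x₁ := by
    set C : Set (κ → ℂ) := S ∩ g ⁻¹' (Set.Ici (g x₁)) with hC
    have hCc : IsCompact C := hSc.of_isClosed_subset
      ((hgc.mono Set.sdiff_subset).preimage_isClosed_of_isClosed hSc.isClosed isClosed_Ici)
      Set.inter_subset_left
    rcases C.eq_empty_or_nonempty with hCe | hCn
    · refine ⟨0, fun x hx => ?_⟩
      by_contra! hlt
      exact absurd (show x ∈ C from ⟨hx, by simpa using hlt⟩) (by simp [hCe])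
    · have hCK : C ⊆ K := Set.inter_subset_left.trans Set.sdiff_subset
      obtain ⟨y, hy, hym⟩ := hCc.exists_isMinOn hCn (hqc.mono hCK)
      obtain ⟨z, hz, hzm⟩ := hCc.exists_isMaxOn hCn (hgc.mono hCK)
      have hqy : 0 < q y := lt_of_le_of_ne (hq0 y) fun h0 =>
        absurd (hεS y hy.1 h0.symm) (not_lt.2 hy.2)
      have hgz : g x₁ ≤ g z := hz.2
      have hM : 0 ≤ (g z - g x₁ + 1) / q y := div_nonneg (by linarith) hqy.le
      refine ⟨(g z - g x₁ + 1) / q y, fun x hx => ?_⟩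
      by_cases hxC : x ∈ C
      · have h1 : q y ≤ q x := isMinOn_iff.1 hym x hxC
        have h2 : g x ≤ g z := isMaxOn_iff.1 hzm x hxC
        have h3 := mul_le_mul_of_nonneg_left h1 hM
        rw [div_mul_cancel₀ _ hqy.ne'] at h3
        linarith
      · have h1 : g x < g x₁ := by
          by_contra! hlt
          exact hxC ⟨hx, hlt⟩
        have := mul_nonneg hM (hq0 x)
        linarith
  obtain ⟨y, hyK, hym⟩ := hK.exists_isMaxOn (f := fun x => g x - M * q x) ⟨x₁, hx₁⟩
    (hgc.sub (hqc.const_smul M))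
  have hqx₁ : q x₁ = 0 := by simp [hq, hfx₁]
  have hyI : y ∈ interior K := by
    by_contra hyI
    have h1 := isMaxOn_iff.1 hym x₁ hx₁
    have h2 := hMS y ⟨hyK, hyI⟩
    simp only [hqx₁, mul_zero, sub_zero] at h1
    linarith
  -- a direction killed by the differentials of the `f i`
  obtain ⟨v, hv, hfv⟩ : ∃ v : κ → ℂ, v ≠ 0 ∧ ∀ i, fderiv ℂ (f i) y v = 0 := by
    have := LinearMap.ker_ne_bot_of_finrank_lt
      (f := LinearMap.pi fun i => (fderiv ℂ (f i) y).toLinearMap) (by simpa using hcard)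
    obtain ⟨v, hv, hv0⟩ := (Submodule.ne_bot_iff _).1 this
    exact ⟨v, hv0, fun i => congrFun (LinearMap.mem_ker.1 hv) i⟩
  have hline : ∀ s : ℂ, HasDerivAt (fun s : ℂ => y + s • v) v s := fun s => by
    simpa using ((hasDerivAt_id s).smul_const v).const_add y
  have hline0 : Tendsto (fun s : ℂ => y + s • v) (𝓝 0) (𝓝 y) := by
    simpa using (hline 0).continuousAt.tendsto
  have hnear : ∀ᶠ s : ℂ in 𝓝 0, y + s • v ∈ K :=
    hline0.eventually (mem_interior_iff_mem_nhds.1 hyI)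
  refine not_isLocalMax_re_add_normSq_sub (h := fun s => h (y + s • v))
    (f := fun i s => f i (y + s • v)) (x := y) (M := M) hε hv ?_ ?_ ?_ ?_
  · filter_upwards [hnear] with s hs
    exact (hh _ hs).comp s (hline s).differentiableAt
  · intro i
    filter_upwards [hnear] with s hs
    exact (hf i _ hs).comp s (hline s).differentiableAt
  · intro i
    have h1 : HasFDerivAt (f i) (fderiv ℂ (f i) y) (y + (0 : ℂ) • v) := by
      simpa using (hf i y hyK).hasFDerivAt
    have h2 := h1.comp_hasDerivAt (0 : ℂ) (hline 0)
    rw [hfv i] at h2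
    exact h2
  · filter_upwards [hnear] with s hs
    have := isMaxOn_iff.1 hym _ hs
    simpa [hg, hr, hq] using this

open Filter Topology in
/-- A set of Hausdorff dimension less than `2 m` meets the kernel of some linear map to `ℂ^m` at
most in the origin. -/
theorem exists_linearMap_ne_zero_of_dimH_lt {κ : Type*} [Fintype κ] {m : ℕ} {Z : Set (κ → ℂ)}
    (hZ : dimH Z < (2 * m : ℕ)) :
    ∃ T : (κ → ℂ) →ₗ[ℂ] (Fin m → ℂ), ∀ z ∈ Z, z ≠ 0 → T z ≠ 0 := by
  classical
  suffices H : ∀ s : Finset κ, ∃ T : (κ → ℂ) →ₗ[ℂ] (Fin m → ℂ),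
      ∀ z ∈ Z, (∀ i ∉ s, z i = 0) → z ≠ 0 → T z ≠ 0 by
    obtain ⟨T, hT⟩ := H Finset.univ
    exact ⟨T, fun z hz => hT z hz (by simp)⟩
  intro s
  induction s using Finset.induction_on with
  | empty => exact ⟨0, fun z _ h0 hz => absurd (funext fun i => h0 i (by simp)) hz⟩
  | insert a s ha ih =>
    obtain ⟨T, hT⟩ := ih
    set φ : (κ → ℂ) → (Fin m → ℂ) := fun z => -((z a)⁻¹ • T z) with hφ
    have hdim : dimH (φ '' {z ∈ Z | z a ≠ 0}) < (2 * m : ℕ) := by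
      refine lt_of_le_of_lt (dimH_image_le_of_locally_lipschitzOn fun z hz => ?_)
        ((dimH_mono (Set.sep_subset _ _)).trans_lt hZ)
      have hT' : ContDiff ℂ 1 T := (LinearMap.toContinuousLinearMap T).contDiff
      have ha' : ContDiff ℂ 1 fun z : κ → ℂ => z a := contDiff_apply ℂ ℂ a
      have hc : ContDiffAt ℂ 1 φ z :=
        ((ha'.contDiffAt.inv hz.2).smul hT'.contDiffAt).neg
      obtain ⟨C, t, ht, hL⟩ := hc.exists_lipschitzOnWith
      exact ⟨C, t, mem_nhdsWithin_of_mem_nhds ht, hL⟩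
    obtain ⟨w, hw⟩ : ∃ w, w ∉ φ '' {z ∈ Z | z a ≠ 0} := by
      by_contra! hall
      rw [Set.eq_univ_of_forall hall, Real.dimH_univ_eq_finrank,
        show Module.finrank ℝ (Fin m → ℂ) = 2 * m by
          simp [Module.finrank_pi_fintype, Complex.finrank_real_complex, mul_comm]] at hdim
      exact lt_irrefl _ hdim
    refine ⟨T + (LinearMap.proj a).smulRight w, fun z hz hzs hz0 h0 => ?_⟩
    simp only [LinearMap.add_apply, LinearMap.smulRight_apply, LinearMap.proj_apply] at h0
    by_cases hza : z a = 0
    · refine hT z hz (fun i hi => ?_) hz0 (by simpa [hza] using h0)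
      by_cases hia : i = a
      · rw [hia, hza]
      · exact hzs i (by simp [hia, hi])
    · refine hw ⟨z, ⟨hz, hza⟩, ?_⟩
      simp only [hφ]
      rw [eq_neg_of_add_eq_zero_left h0, smul_neg, neg_neg, inv_smul_smul₀ hza]

open Filter Topology in
/-- If the common zero set `Z` of `p` holomorphic functions on a closed ball of `ℂ^(p + m)` meets
a fibre of a linear map to `ℂ^m` only in the centre, the image of `Z` is a neighbourhood of the
image of the centre. -/
theorem exists_ball_subset_image_zeros {ι κ : Type*} [Fintype ι] [Fintype κ] {m : ℕ}
    (hcard : Fintype.card ι + m = Fintype.card κ) {x₀ : κ → ℂ} {r : ℝ} (hr : 0 < r)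
    {f : ι → (κ → ℂ) → ℂ} (hf : ∀ i, ∀ x ∈ Metric.closedBall x₀ r, DifferentiableAt ℂ (f i) x)
    (hfx₀ : ∀ i, f i x₀ = 0) (T : (κ → ℂ) →ₗ[ℂ] (Fin m → ℂ))
    (hT : ∀ x ∈ Metric.closedBall x₀ r, (∀ i, f i x = 0) → x ≠ x₀ → T (x - x₀) ≠ 0) :
    ∃ δ > 0, Metric.ball 0 δ ⊆
      (fun x => T (x - x₀)) '' {x ∈ Metric.closedBall x₀ r | ∀ i, f i x = 0} := by
  classical
  obtain ⟨L, hL⟩ : ∃ L : (κ → ℂ) → (Fin m → ℂ), L = fun x => T (x - x₀) := ⟨_, rfl⟩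
  have hLd : Differentiable ℂ L := by
    rw [hL]
    exact (LinearMap.toContinuousLinearMap T).differentiable.comp (differentiable_id.sub_const x₀)
  have hLj : ∀ j, Differentiable ℂ fun x => L x j := fun j => differentiable_pi.1 hLd j
  have hLx₀ : L x₀ = 0 := by simp [hL]
  obtain ⟨Z, hZ⟩ : ∃ Z : Set (κ → ℂ), Z = {x ∈ Metric.closedBall x₀ r | ∀ i, f i x = 0} :=
    ⟨_, rfl⟩
  have hx₀Z : x₀ ∈ Z := by
    rw [hZ]
    exact ⟨Metric.mem_closedBall_self hr.le, hfx₀⟩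
  have hZc : IsCompact Z := by
    have h1 : IsClosed (Metric.closedBall x₀ r ∩ (fun x i => f i x) ⁻¹' {0}) := by
      refine ContinuousOn.preimage_isClosed_of_isClosed ?_ Metric.isClosed_closedBall
        isClosed_singleton
      exact continuousOn_pi.2 fun i x hx => (hf i x hx).continuousAt.continuousWithinAt
    have h2 : Z = Metric.closedBall x₀ r ∩ (fun x i => f i x) ⁻¹' {0} := by
      rw [hZ]
      ext x
      simp [funext_iff]
    rw [h2]
    exact (isCompact_closedBall x₀ r).of_isClosed_subset h1 Set.inter_subset_left
  obtain ⟨δ, hδ, hδS⟩ : ∃ δ > 0, ∀ x ∈ Z, dist x x₀ = r → δ ≤ ‖L x‖ := by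
    have hSc : IsCompact (Z ∩ Metric.sphere x₀ r) := hZc.inter_right Metric.isClosed_sphere
    rcases (Z ∩ Metric.sphere x₀ r).eq_empty_or_nonempty with he | hn
    · exact ⟨1, one_pos, fun x hx hxr => absurd (show x ∈ Z ∩ Metric.sphere x₀ r from ⟨hx, hxr⟩)
        (by simp [he])⟩
    · obtain ⟨y, hy, hym⟩ := hSc.exists_isMinOn hn hLd.continuous.norm.continuousOn
      refine ⟨‖L y‖, norm_pos_iff.2 ?_, fun x hx hxr => isMinOn_iff.1 hym x ⟨hx, hxr⟩⟩
      have hyZ := hy.1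
      rw [hZ] at hyZ
      rw [hL]
      refine hT y hyZ.1 hyZ.2 fun h => ?_
      have := hy.2
      rw [h, Metric.mem_sphere, dist_self] at this
      exact hr.ne this
  refine ⟨δ / 3, by positivity, fun c hc => ?_⟩
  rw [← hZ, ← hL]
  rw [mem_ball_zero_iff] at hc
  by_contra hcZ
  have hcL : ∀ x ∈ Z, L x ≠ c := fun x hx h => hcZ ⟨x, hx, h⟩
  have hc0 : c ≠ 0 := fun h => hcL x₀ hx₀Z (by rw [hLx₀, h])
  obtain ⟨j, hj⟩ := Function.ne_iff.1 hc0
  rw [Pi.zero_apply] at hj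
  -- the linear equations saying that `L x` is a multiple of `c`, and the multiple
  obtain ⟨τ, hτ⟩ : ∃ τ : (κ → ℂ) → ℂ, τ = fun x => L x j / c j := ⟨_, rfl⟩
  obtain ⟨lin, hlin⟩ : ∃ lin : {i : Fin m // i ≠ j} → (κ → ℂ) → ℂ,
    lin = fun i x => L x i.1 * c j - c i.1 * L x j := ⟨_, rfl⟩
  have hτd : Differentiable ℂ τ := by
    rw [hτ]
    simpa only [div_eq_mul_inv] using (hLj j).mul_const _
  have hlind : ∀ i, Differentiable ℂ (lin i) := fun i => by
    rw [hlin]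
    exact ((hLj i).mul_const _).sub ((hLj j).const_mul _)
  have hLτ : ∀ x, (∀ i, lin i x = 0) → L x = τ x • c := fun x hx => by
    ext i
    simp only [hτ, Pi.smul_apply, smul_eq_mul]
    by_cases hi : i = j
    · rw [hi, div_mul_cancel₀ _ hj]
    · have := hx ⟨i, hi⟩
      simp only [hlin] at this
      field_simp
      linear_combination this
  have hτx₀ : τ x₀ = 0 := by simp [hτ, hLx₀]
  have hlinx₀ : ∀ i, lin i x₀ = 0 := by simp [hlin, hLx₀]
  -- the point of the slice whose parameter is nearest to `1`
  have hKc : IsCompact (Z ∩ {x | ∀ i, lin i x = 0}) := by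
    refine hZc.inter_right ?_
    rw [Set.ofPred_forall]
    exact isClosed_iInter fun i => isClosed_eq (hlind i).continuous continuous_const
  obtain ⟨x₁, hx₁, hx₁m⟩ := hKc.exists_isMinOn ⟨x₀, hx₀Z, hlinx₀⟩
    (f := fun x => ‖τ x - 1‖) (hτd.continuous.sub continuous_const).norm.continuousOn
  rw [isMinOn_iff] at hx₁m
  obtain ⟨d, hd⟩ : ∃ d, d = 1 - τ x₁ := ⟨_, rfl⟩
  have hd0 : d ≠ 0 := fun h => hcL x₁ hx₁.1 <| by
    rw [hLτ x₁ hx₁.2, show τ x₁ = 1 by linear_combination hd - h, one_smul]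
  have hdn : ‖τ x₁ - 1‖ = ‖d‖ := by rw [hd, norm_sub_rev]
  have hd1 : ‖d‖ ≤ 1 := by
    simpa [hτx₀, hdn] using hx₁m x₀ ⟨hx₀Z, hlinx₀⟩
  obtain ⟨u, hu⟩ : ∃ u : (κ → ℂ) → ℂ, u = fun x => (τ x - τ x₁) / d := ⟨_, rfl⟩
  have hud : Differentiable ℂ u := by
    rw [hu]
    simpa only [div_eq_mul_inv] using (hτd.sub_const _).mul_const _
  have hux₁ : u x₁ = 0 := by simp [hu]
  have hx₁Z := hx₁.1
  rw [hZ] at hx₁Z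
  obtain ⟨x, hxK, hxI, hfx, hre⟩ := exists_mem_frontier_re_le
    (ι := ι ⊕ {i : Fin m // i ≠ j}) (K := Metric.closedBall x₀ r ∩ {x | ‖u x‖ ≤ 1 / 4})
    (h := fun x => u x + u x ^ 2) (f := Sum.elim f lin) (x₁ := x₁)
    (by
      have := j.pos
      simp only [Fintype.card_sum, ne_eq, Fintype.card_subtype_compl, Fintype.card_fin,
        Fintype.card_unique]
      omega)
    ((isCompact_closedBall x₀ r).inter_right
      (isClosed_le hud.continuous.norm continuous_const))
    (fun x _ => (hud x).add ((hud x).pow 2))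
    (by
      rintro (i | i) x hx
      · exact hf i x hx.1
      · exact hlind i x)
    ⟨hx₁Z.1, by simp [hux₁]⟩
    (by
      rintro (i | i)
      · exact hx₁Z.2 i
      · exact hx₁.2 i)
  have hxZ : x ∈ Z := by
    rw [hZ]
    exact ⟨hxK.1, fun i => hfx (Sum.inl i)⟩
  have hxl : ∀ i, lin i x = 0 := fun i => hfx (Sum.inr i)
  have hxu : ‖u x‖ ≤ 1 / 4 := hxK.2
  by_cases hxr : dist x x₀ = r
  · have h1 := hδS x hxZ hxr
    rw [hLτ x hxl, norm_smul] at h1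
    have h2 : τ x = d * u x + (1 - d) := by
      simp only [hu]
      rw [mul_div_cancel₀ _ hd0]
      linear_combination hd
    have h3 : ‖τ x‖ ≤ 9 / 4 := by
      rw [h2]
      refine (norm_add_le _ _).trans ?_
      have h4 : ‖1 - d‖ ≤ 1 + ‖d‖ := by simpa using norm_sub_le (1 : ℂ) d
      rw [norm_mul]
      nlinarith [norm_nonneg d, norm_nonneg (u x)]
    nlinarith [norm_nonneg c, norm_nonneg (τ x)]
  · have hxb : x ∈ Metric.ball x₀ r := lt_of_le_of_ne hxK.1 hxr
    have hu4 : ‖u x‖ = 1 / 4 := by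
      refine le_antisymm hxu (not_lt.1 fun hlt => hxI ?_)
      refine mem_interior.2 ⟨Metric.ball x₀ r ∩ {x | ‖u x‖ < 1 / 4}, fun y hy =>
        ⟨Metric.ball_subset_closedBall hy.1, le_of_lt (b := (1 / 4 : ℝ)) hy.2⟩, ?_, hxb, hlt⟩
      exact Metric.isOpen_ball.inter (isOpen_lt hud.continuous.norm continuous_const)
    have h1 : 1 ≤ ‖u x - 1‖ := by
      have h2 : u x - 1 = (τ x - 1) / d := by
        simp only [hu]
        field_simp
        linear_combination -hd
      rw [h2, norm_div, one_le_div (norm_pos_iff.2 hd0), ← hdn]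
      exact hx₁m x ⟨hxZ, hxl⟩
    have e1 : (u x).re ^ 2 + (u x).im ^ 2 = 1 / 16 := by
      have := Complex.sq_norm_sub_sq_re (u x)
      rw [hu4] at this
      linarith
    have e2 : 1 ≤ ((u x).re - 1) ^ 2 + (u x).im ^ 2 := by
      have := Complex.sq_norm_sub_sq_re (u x - 1)
      simp only [Complex.sub_re, Complex.one_re, Complex.sub_im, Complex.one_im, sub_zero] at this
      nlinarith
    have e3 : 0 ≤ (u x).re + ((u x).re ^ 2 - (u x).im ^ 2) := by
      have := hre
      simp only [hux₁] at this
      simpa [pow_two] using this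
    nlinarith [sq_nonneg (u x).im]

/-- The common zero set of `p` holomorphic functions in `p + m` variables has Hausdorff dimension
at least `2 m` near each of its points. -/
theorem le_dimH_zeros {ι κ : Type*} [Fintype ι] [Fintype κ] {m : ℕ}
    (hcard : Fintype.card ι + m = Fintype.card κ) {x₀ : κ → ℂ} {r : ℝ} (hr : 0 < r)
    {f : ι → (κ → ℂ) → ℂ} (hf : ∀ i, ∀ x ∈ Metric.closedBall x₀ r, DifferentiableAt ℂ (f i) x)
    (hfx₀ : ∀ i, f i x₀ = 0) :
    ((2 * m : ℕ) : ENNReal) ≤ dimH {x ∈ Metric.closedBall x₀ r | ∀ i, f i x = 0} := by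
  by_contra! hlt
  have hsub := (IsometryEquiv.subRight x₀).isometry.dimH_image
    {x ∈ Metric.closedBall x₀ r | ∀ i, f i x = 0}
  obtain ⟨T, hT⟩ := exists_linearMap_ne_zero_of_dimH_lt (hsub.trans_lt hlt)
  obtain ⟨δ, hδ, hball⟩ := exists_ball_subset_image_zeros hcard hr hf hfx₀ T
    fun x hx hfx hne => hT _ ⟨x, ⟨hx, hfx⟩, rfl⟩ (sub_ne_zero.2 hne)
  have h1 : dimH (Metric.ball (0 : Fin m → ℂ) δ) = (2 * m : ℕ) := by
    rw [Real.dimH_of_nonempty_interior (⟨0, by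
      rw [Metric.isOpen_ball.interior_eq]
      exact Metric.mem_ball_self hδ⟩)]
    simp [Module.finrank_pi_fintype, Complex.finrank_real_complex, mul_comm]
  have h2 := (LinearMap.toContinuousLinearMap T).lipschitz.dimH_image_le
    ((IsometryEquiv.subRight x₀) '' {x ∈ Metric.closedBall x₀ r | ∀ i, f i x = 0})
  rw [Set.image_image, hsub] at h2
  exact absurd ((h1.symm.le.trans (dimH_mono hball)).trans h2) (not_le.2 hlt)

/-- Proposition 2.3: let `U ⊆ ℂ^ℓ` be a connected open set, `ω = Σ_i b_i dx_i`
a holomorphic 1-form and `ψ = Σ_I A_I dx_I` a holomorphic `p`-form on `U` with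
`ω ∧ ψ = 0` (expressed coefficientwise).  Then every irreducible component of
`V(ω) \ V(ψ)` has codimension at most `p` in `ℂ^ℓ`: every point of that set has
local (Hausdorff) dimension at least `2(ℓ−p)` in every neighborhood. -/
theorem stmt_2 (ℓ p : ℕ) (U : Set (Fin ℓ → ℂ)) (hUo : IsOpen U) (hUc : IsConnected U)
    (b : Fin ℓ → (Fin ℓ → ℂ) → ℂ) (A : Finset (Fin ℓ) → (Fin ℓ → ℂ) → ℂ)
    (hb : ∀ i, AnalyticOnNhd ℂ (b i) U)
    (hA : ∀ I : Finset (Fin ℓ), I.card = p → AnalyticOnNhd ℂ (A I) U)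
    -- the coefficientwise form of `ω ∧ ψ = 0`:
    (hwedge : ∀ J : Finset (Fin ℓ), J.card = p + 1 → ∀ x ∈ U,
      ∑ i ∈ J, (-1 : ℂ) ^ (J.filter (· < i)).card * (b i x * A (J.erase i) x) = 0) :
    ∀ x ∈ ({x ∈ U | ∀ i, b i x = 0} \
        {x ∈ U | ∀ I : Finset (Fin ℓ), I.card = p → A I x = 0}),
      ∀ W ∈ nhds x,
        ENNReal.ofReal (2 * (ℓ : ℝ) - 2 * p) ≤
          dimH (({x ∈ U | ∀ i, b i x = 0} \
            {x ∈ U | ∀ I : Finset (Fin ℓ), I.card = p → A I x = 0}) ∩ W) := by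
  rintro x ⟨⟨hxU, hbx⟩, hAx⟩ W hW
  obtain ⟨I, hI, hAI⟩ : ∃ I : Finset (Fin ℓ), I.card = p ∧ A I x ≠ 0 := by
    by_contra! h
    exact hAx ⟨hxU, h⟩
  have hpl : p ≤ ℓ := by simpa [hI] using I.card_le_univ
  have hev : ∀ᶠ y in nhds x, y ∈ U ∧ y ∈ W ∧ A I y ≠ 0 :=
    (hUo.eventually_mem hxU).and (Filter.Eventually.and hW
      ((hA I hI x hxU).continuousAt.eventually_ne hAI))
  obtain ⟨r, hr, hball⟩ := Metric.nhds_basis_closedBall.mem_iff.1 hev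
  have hdim := le_dimH_zeros (ι := I) (κ := Fin ℓ) (m := ℓ - p) (x₀ := x) (r := r)
    (f := fun i => b i) (by simp [hI, hpl]) hr
    (fun i y hy => (hb i y (hball hy).1).differentiableAt) (fun i => hbx i)
  have hcast : ENNReal.ofReal (2 * (ℓ : ℝ) - 2 * p) = ((2 * (ℓ - p) : ℕ) : ENNReal) := by
    rw [← ENNReal.ofReal_natCast]
    push_cast [hpl]
    ring_nf
  rw [hcast]
  refine hdim.trans (dimH_mono ?_)
  rintro y ⟨hy, hby⟩
  obtain ⟨hyU, hyW, hAy⟩ := hball hy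
  refine ⟨⟨⟨hyU, fun j => ?_⟩, fun h => hAy (h.2 I hI)⟩, hyW⟩
  by_cases hj : j ∈ I
  · exact hby ⟨j, hj⟩
  · have hw := hwedge (insert j I) (by rw [Finset.card_insert_of_notMem hj, hI]) y hyU
    rw [Finset.sum_insert hj, Finset.erase_insert hj,
      Finset.sum_eq_zero (s := I) fun i hi => by rw [hby ⟨i, hi⟩]; ring, add_zero] at hw
    simpa [hAy] using hw
end

section
/- Let ω ∈ Ω^1(U) and suppose the intersection of V(ψ) over all p-forms ψ with ω ∧ ψ = 0 is empty. Then every irreducible component of V(ω) has codimension at most p. -/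
open MvPolynomial in
/-- A polynomial map whose components are dominated by pure powers of the variables is finite. -/
theorem MvPolynomial.finite_adjoin_of_pow_add {ι K : Type*} [Finite ι] [Field K]
    {P R : ι → MvPolynomial ι K} {N : ℕ} {ε : K} (hε : ε ≠ 0)
    (hR : ∀ i, (R i).totalDegree < N) (hP : ∀ i, P i = C ε * X i ^ N + R i) :
    Module.Finite (Algebra.adjoin K (Set.range P)) (MvPolynomial ι K) := by
  classical
  cases nonempty_fintype ι
  set A := Algebra.adjoin K (Set.range P)
  set B : Set (MvPolynomial ι K) :=
    (fun s => monomial (Finsupp.equivFunOnFinite.symm s) 1) '' Set.Iic fun _ => N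
  have hB : B.Finite := (Set.finite_Iic _).image _
  have key : ∀ d : ℕ, ∀ f : MvPolynomial ι K, f.totalDegree ≤ d → f ∈ Submodule.span A B := by
    intro d
    induction d using Nat.strong_induction_on with
    | _ d ih =>
      intro f hf
      rw [f.as_sum]
      refine Submodule.sum_mem _ fun s hs => ?_
      have hsd : s.degree ≤ d := by
        refine le_trans ?_ hf
        exact le_totalDegree hs
      have hmon : (monomial s (1 : K)) ∈ Submodule.span A B := by
        by_cases h : ∀ i, s i < N
        · exact Submodule.subset_span ⟨s, fun i => (h i).le, by simp⟩
        push Not at h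
        obtain ⟨i, hi⟩ := h
        have hle : Finsupp.single i N ≤ s := by simpa using hi
        obtain ⟨t, rfl⟩ := exists_add_of_le hle
        have hdeg : N + t.degree ≤ d := by simpa using hsd
        have hN : 0 < N := lt_of_le_of_lt (Nat.zero_le _) (hR i)
        have h1 := ih t.degree (by omega) (monomial t 1) (totalDegree_monomial_le _ _)
        have hq : (monomial t 1 * R i).totalDegree ≤ t.degree + (R i).totalDegree :=
          (totalDegree_mul _ _).trans (by gcongr; exact totalDegree_monomial_le _ _)
        have h2 := ih (t.degree + (R i).totalDegree) (by have := hR i; omega) _ hq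
        have e : monomial (Finsupp.single i N + t) (1 : K)
            = C ε⁻¹ * (P i * monomial t 1 - monomial t 1 * R i) := by
          have : monomial (Finsupp.single i N + t) (1 : K) = X i ^ N * monomial t 1 := by
            rw [X_pow_eq_monomial, monomial_mul, one_mul]
          have h3 : (C ε⁻¹ : MvPolynomial ι K) * C ε = 1 := by
            rw [← C_mul, inv_mul_cancel₀ hε, C_1]
          rw [this, hP]
          linear_combination - X i ^ N * monomial t 1 * h3
        rw [e]
        have h4 := Submodule.smul_mem _ (⟨P i, Algebra.subset_adjoin ⟨i, rfl⟩⟩ : A) h1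
        have h5 := Submodule.smul_mem _ (algebraMap K A ε⁻¹) (Submodule.sub_mem _ h4 h2)
        exact h5
      have h6 := Submodule.smul_mem _ (algebraMap K A (coeff s f)) hmon
      convert h6 using 1
      rw [algebraMap_smul, smul_monomial, smul_eq_mul, mul_one]
  refine ⟨⟨hB.toFinset, ?_⟩⟩
  rw [Set.Finite.coe_toFinset, eq_top_iff]
  exact fun f _ => key _ f le_rfl

open MvPolynomial in
/-- As many polynomials as variables are algebraically independent as soon as the polynomial ring is
integral over the subalgebra they generate. -/
theorem MvPolynomial.algebraicIndependent_of_isIntegral {ι K : Type*} [Finite ι] [Field K]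
    {P : ι → MvPolynomial ι K}
    [Algebra.IsIntegral (Algebra.adjoin K (Set.range P)) (MvPolynomial ι K)] :
    AlgebraicIndependent K P := by
  refine (Algebra.IsAlgebraic.isTranscendenceBasis_of_lift_le_trdeg_of_finite K P ?_).1
  rw [MvPolynomial.trdeg_of_isDomain]
  simp

open MvPolynomial in
/-- For an integral extension `A ⊆ K[X]` with `A` normal, every root of the specialised minimal
polynomial of `g` is the value of `g` at a point lying over the given point of `A`. -/
theorem MvPolynomial.exists_eval_eq_of_minpoly_root {ι K A : Type*} [Finite ι] [Field K]
    [IsAlgClosed K] [CommRing A] [IsDomain A] [IsIntegrallyClosed A] [Algebra K A]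
    [Algebra A (MvPolynomial ι K)] [IsScalarTower K A (MvPolynomial ι K)]
    [FaithfulSMul A (MvPolynomial ι K)] [Algebra.IsIntegral A (MvPolynomial ι K)]
    (g : MvPolynomial ι K) (e : A →ₐ[K] K) (τ : K)
    (h : ((minpoly A g).map (e : A →+* K)).IsRoot τ) :
    ∃ z : ι → K, (∀ a, eval z (algebraMap A (MvPolynomial ι K) a) = e a) ∧ eval z g = τ := by
  let : Algebra (Polynomial A) (MvPolynomial ι K) := (Polynomial.aeval g).toRingHom.toAlgebra
  have halg : ∀ q : Polynomial A, algebraMap (Polynomial A) (MvPolynomial ι K) q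
      = Polynomial.aeval g q := fun _ => rfl
  have : IsScalarTower A (Polynomial A) (MvPolynomial ι K) :=
    IsScalarTower.of_algebraMap_eq fun a => by
      rw [halg, Polynomial.algebraMap_eq, Polynomial.aeval_C]
  have : Algebra.IsIntegral (Polynomial A) (MvPolynomial ι K) := Algebra.IsIntegral.tower_top A
  have hesurj : Function.Surjective (Polynomial.eval₂RingHom (e : A →+* K) τ) := fun c =>
    ⟨Polynomial.C (algebraMap K A c), by simp⟩
  have hmax : (RingHom.ker (Polynomial.eval₂RingHom (e : A →+* K) τ)).IsMaximal :=
    RingHom.ker_isMaximal_of_surjective _ hesurj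
  have hker : RingHom.ker (algebraMap (Polynomial A) (MvPolynomial ι K)) ≤
      RingHom.ker (Polynomial.eval₂RingHom (e : A →+* K) τ) := by
    change RingHom.ker (Polynomial.aeval g).toRingHom ≤ _
    rw [minpoly.ker_eval (Algebra.IsIntegral.isIntegral g), Ideal.span_singleton_le_iff_mem,
      RingHom.mem_ker]
    rwa [Polynomial.IsRoot, Polynomial.eval_map] at h
  obtain ⟨Q, hQ, hQc⟩ := Ideal.exists_ideal_over_maximal_of_isIntegral _ hker
  obtain ⟨z, rfl⟩ := isMaximal_iff_eq_vanishingIdeal_singleton.1 hQ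
  have hz : ∀ q : Polynomial A, Polynomial.eval₂RingHom (e : A →+* K) τ q = 0 →
      eval z (Polynomial.aeval g q) = 0 := by
    intro q hq
    rw [← RingHom.mem_ker, ← hQc, Ideal.mem_comap, halg,
      mem_vanishingIdeal_singleton_iff] at hq
    simpa using hq
  have hC (c : K) : algebraMap A (MvPolynomial ι K) (algebraMap K A c) = C c :=
    (IsScalarTower.algebraMap_apply K A (MvPolynomial ι K) c).symm
  refine ⟨z, fun a => ?_, ?_⟩
  · have h1 := hz (Polynomial.C a - Polynomial.C (algebraMap K A (e a))) (by simp)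
    rw [map_sub, Polynomial.aeval_C, Polynomial.aeval_C, map_sub, hC, eval_C] at h1
    exact sub_eq_zero.1 h1
  · have h1 := hz (Polynomial.X - Polynomial.C (algebraMap K A τ)) (by simp)
    rw [map_sub, Polynomial.aeval_X, Polynomial.aeval_C, map_sub, hC, eval_C] at h1
    exact sub_eq_zero.1 h1

open MvPolynomial in
/-- A finite algebraically independent family of polynomials gives a polynomial map whose fibres
are described, through any polynomial `g`, by a monic polynomial with coefficients that are
polynomial functions of the base point. -/
theorem AlgebraicIndependent.exists_monic_isRoot_iff {ι K : Type*} [Finite ι] [Field K]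
    [IsAlgClosed K] {P : ι → MvPolynomial ι K} (hP : AlgebraicIndependent K P)
    [Algebra.IsIntegral (Algebra.adjoin K (Set.range P)) (MvPolynomial ι K)]
    (g : MvPolynomial ι K) :
    ∃ q : Polynomial (MvPolynomial ι K), q.Monic ∧ ∀ (w : ι → K) (τ : K),
      (q.map (eval w)).IsRoot τ ↔ ∃ z, (∀ i, eval z (P i) = w i) ∧ eval z g = τ := by
  have : IsIntegrallyClosed (Algebra.adjoin K (Set.range P)) :=
    IsIntegrallyClosed.of_equiv hP.aevalEquiv.toRingEquiv
  have hmap (w : ι → K) : ((minpoly (Algebra.adjoin K (Set.range P)) g).map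
      (hP.aevalEquiv.symm : _ →+* MvPolynomial ι K)).map (eval w) =
      (minpoly (Algebra.adjoin K (Set.range P)) g).map
        (((aeval w).comp hP.aevalEquiv.symm.toAlgHom : _ →ₐ[K] K) : _ →+* K) := by
    rw [Polynomial.map_map]
    rfl
  refine ⟨(minpoly (Algebra.adjoin K (Set.range P)) g).map
    (hP.aevalEquiv.symm : _ →+* MvPolynomial ι K),
    (minpoly.monic (Algebra.IsIntegral.isIntegral g)).map _, fun w τ => ⟨fun h => ?_, ?_⟩⟩
  · rw [hmap] at h
    obtain ⟨z, hz, hg⟩ := exists_eval_eq_of_minpoly_root g _ τ h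
    refine ⟨z, fun i => ?_, hg⟩
    have := hz (hP.aevalEquiv (X i))
    rw [hP.algebraMap_aevalEquiv] at this
    simpa using this
  · rintro ⟨z, hz, rfl⟩
    obtain rfl : (fun i => eval z (P i)) = w := funext hz
    have key : ((eval fun i => eval z (P i)).comp
        (hP.aevalEquiv.symm : _ →+* MvPolynomial ι K))
        = (eval z).comp (algebraMap (Algebra.adjoin K (Set.range P)) (MvPolynomial ι K)) := by
      ext a
      obtain ⟨q, rfl⟩ := hP.aevalEquiv.surjective a
      rw [RingHom.comp_apply, RingHom.comp_apply, hP.algebraMap_aevalEquiv, RingHom.coe_coe,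
        AlgEquiv.symm_apply_apply]
      induction q using MvPolynomial.induction_on with
      | C a => simp
      | add p q hp hq => simp_all
      | mul_X p i hp => simp_all
    rw [Polynomial.map_map, key, Polynomial.IsRoot, Polynomial.eval_map, ← Polynomial.hom_eval₂,
      ← Polynomial.aeval_def, minpoly.aeval, map_zero]

/-- The roots of a monic polynomial depending polynomially on parameters are locally bounded. -/
theorem MvPolynomial.exists_eventually_norm_le_of_isRoot {ι : Type*} [Finite ι]
    {q : Polynomial (MvPolynomial ι ℂ)} (hq : q.Monic) (w₀ : ι → ℂ) :
    ∃ M : ℝ, ∀ᶠ w in nhds w₀, ∀ τ, (q.map (eval w)).IsRoot τ → ‖τ‖ ≤ M := by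
  have hcont : Continuous fun w : ι → ℂ => Polynomial.cauchyBound (q.map (eval w)) := by
    have : (fun w : ι → ℂ => Polynomial.cauchyBound (q.map (eval w))) =
        fun w => (Finset.range q.natDegree).sup (fun k => ‖eval w (q.coeff k)‖₊) + 1 := by
      funext w
      simp [Polynomial.cauchyBound, hq.natDegree_map, (hq.map (eval w)).leadingCoeff]
    rw [this]
    refine Continuous.add (Continuous.finset_sup_apply ?_) continuous_const
    exact fun k _ => (MvPolynomial.continuous_eval _).nnnorm
  refine ⟨Polynomial.cauchyBound (q.map (eval w₀)) + 1, ?_⟩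
  have h := hcont.continuousAt.eventually_lt_const
    (lt_add_one (Polynomial.cauchyBound (q.map (eval w₀))))
  filter_upwards [h] with w hw τ hτ
  have h1 := hτ.norm_lt_cauchyBound (hq.map (eval w)).ne_zero
  exact_mod_cast (h1.trans hw).le

/-- A root at the origin of a monic polynomial depending polynomially on parameters deforms to
small roots. -/
theorem MvPolynomial.eventually_exists_isRoot_norm_lt {ι : Type*} [Finite ι]
    {q : Polynomial (MvPolynomial ι ℂ)} (hq : q.Monic) {w₀ : ι → ℂ}
    (h₀ : (q.map (eval w₀)).IsRoot 0) {η : ℝ} (hη : 0 < η) :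
    ∀ᶠ w in nhds w₀, ∃ τ, (q.map (eval w)).IsRoot τ ∧ ‖τ‖ < η := by
  have hcont : Continuous fun w : ι → ℂ => ‖eval w (q.coeff 0)‖ :=
    (MvPolynomial.continuous_eval _).norm
  have hz : ‖eval w₀ (q.coeff 0)‖ < η ^ q.natDegree := by
    rw [Polynomial.IsRoot, ← Polynomial.coeff_zero_eq_eval_zero, Polynomial.coeff_map] at h₀
    rw [h₀, norm_zero]
    positivity
  filter_upwards [hcont.continuousAt.eventually_lt_const hz] with w hw
  by_contra! hcon
  have hsp := IsAlgClosed.splits (q.map (eval w))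
  have h1 := hsp.coeff_zero_eq_prod_roots_of_monic (hq.map _)
  rw [Polynomial.coeff_map] at h1
  rw [h1, norm_mul, norm_pow, norm_neg, norm_one, one_pow, one_mul,
    ← hq.natDegree_map (eval w), hsp.natDegree_eq_card_roots] at hw
  refine hw.not_ge ?_
  have hprod : ∀ s : Multiset ℂ, (∀ τ ∈ s, η ≤ ‖τ‖) → η ^ s.card ≤ ‖s.prod‖ := by
    intro s
    induction s using Multiset.induction_on with
    | empty => simp
    | cons a s ih =>
      intro h
      rw [Multiset.card_cons, Multiset.prod_cons, norm_mul, pow_succ']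
      gcongr
      · exact h a (by simp)
      · exact ih fun τ hτ => h τ (by simp [hτ])
  exact hprod _ fun τ hτ => hcon τ (Polynomial.isRoot_of_mem_roots hτ)

/-- A finite polynomial map `ℂⁿ → ℂⁿ` is open. -/
theorem AlgebraicIndependent.isOpenMap_eval {ι : Type*} [Fintype ι]
    {P : ι → MvPolynomial ι ℂ} (hP : AlgebraicIndependent ℂ P)
    [Algebra.IsIntegral (Algebra.adjoin ℂ (Set.range P)) (MvPolynomial ι ℂ)] :
    IsOpenMap fun (z : ι → ℂ) i => MvPolynomial.eval z (P i) := by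
  classical
  set F : (ι → ℂ) → ι → ℂ := fun z i => MvPolynomial.eval z (P i) with hF
  have hFc : Continuous F := continuous_pi fun i => MvPolynomial.continuous_eval (P i)
  choose q hqm hq using hP.exists_monic_isRoot_iff
  rw [isOpenMap_iff_nhds_le]
  intro z₀ s hs
  rw [Filter.mem_map] at hs
  obtain ⟨O, hOs, hO, hzO⟩ := mem_nhds_iff.1 hs
  have hfib : {z | F z = F z₀}.Finite := by
    refine (Set.Finite.pi' fun i => ((q (MvPolynomial.X i)).map
      (MvPolynomial.eval (F z₀))).roots.toFinset.finite_toSet).subset fun z hz i => ?_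
    rw [Finset.mem_coe, Multiset.mem_toFinset, Polynomial.mem_roots ((hqm _).map _).ne_zero]
    exact (hq _ _ _).2 ⟨z, fun j => congrFun hz j, by simp⟩
  obtain ⟨g, hg₀, hg⟩ : ∃ g : MvPolynomial ι ℂ, MvPolynomial.eval z₀ g = 0 ∧
      ∀ z, F z = F z₀ → z ≠ z₀ → MvPolynomial.eval z g = 1 := by
    have (z : ι → ℂ) : ∃ L : MvPolynomial ι ℂ, MvPolynomial.eval z₀ L = 1 ∧
        (z ≠ z₀ → MvPolynomial.eval z L = 0) := by
      by_cases h : z = z₀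
      · exact ⟨1, by simp, fun h' => (h' h).elim⟩
      · obtain ⟨j, hj⟩ := Function.ne_iff.1 h
        refine ⟨1 - MvPolynomial.C (z j - z₀ j)⁻¹ * (MvPolynomial.X j - MvPolynomial.C (z₀ j)),
          by simp, fun _ => ?_⟩
        simp [inv_mul_cancel₀ (sub_ne_zero.2 hj)]
    choose L hL₀ hL using this
    refine ⟨1 - ∏ z ∈ hfib.toFinset, L z, by simp [hL₀, map_prod], fun z hz hne => ?_⟩
    rw [map_sub, map_one, map_prod, Finset.prod_eq_zero (i := z) (by simpa using hz) (hL z hne),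
      sub_zero]
  have hbd : ∃ M : ℝ, ∀ᶠ w in nhds (F z₀), ∀ z, F z = w → ‖z‖ ≤ M := by
    choose M hM using fun i =>
      MvPolynomial.exists_eventually_norm_le_of_isRoot (hqm (MvPolynomial.X i)) (F z₀)
    refine ⟨∑ i, |M i|, ?_⟩
    filter_upwards [Filter.eventually_all.2 hM] with w hw z hz
    refine (pi_norm_le_iff_of_nonneg (by positivity)).2 fun i => ?_
    refine ((hw i (z i) ((hq _ _ _).2 ⟨z, fun j => congrFun hz j, by simp⟩)).trans
      (le_abs_self _)).trans ?_
    exact Finset.single_le_sum (f := fun i => |M i|) (fun i _ => abs_nonneg _) (Finset.mem_univ i)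
  obtain ⟨M, hM⟩ := hbd
  have hK : IsCompact (Metric.closedBall (0 : ι → ℂ) M \ O) :=
    (isCompact_closedBall _ _).diff hO
  obtain ⟨c, hc, hcK⟩ := hK.exists_forall_le' (a := 0)
    (f := fun z => ‖F z - F z₀‖ + ‖MvPolynomial.eval z g‖)
    (by have := MvPolynomial.continuous_eval g; fun_prop) (by
      rintro z ⟨-, hz⟩
      by_cases h : F z = F z₀
      · rw [hg z h (by rintro rfl; exact hz hzO)]
        simp only [norm_one]; positivity
      · have := norm_pos_iff.2 (sub_ne_zero.2 h)
        positivity)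
  have hroot := MvPolynomial.eventually_exists_isRoot_norm_lt (hqm g) (w₀ := F z₀)
    ((hq _ _ _).2 ⟨z₀, fun _ => rfl, hg₀⟩) (half_pos hc)
  filter_upwards [hroot, hM, Metric.ball_mem_nhds (F z₀) (half_pos hc)] with w h1 h2 h3
  obtain ⟨τ, hτ, hτn⟩ := h1
  obtain ⟨z, hzw, rfl⟩ := (hq _ _ _).1 hτ
  have hzF : F z = w := funext hzw
  have : z ∈ O := by
    by_contra hzO'
    have h4 := hcK z ⟨by simpa using h2 z hzF, hzO'⟩
    rw [hzF, ← dist_eq_norm] at h4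
    rw [Metric.mem_ball] at h3
    linarith
  have h5 := hOs this
  rwa [Set.mem_preimage, hzF] at h5

/-- A continuous map on a closed ball that is a uniform limit of polynomial maps, and that
does not vanish on the boundary, covers a neighbourhood of its value `0` at the centre. -/
theorem exists_ball_subset_image_of_polynomial_approx {ι : Type*} [Fintype ι]
    {h : (ι → ℂ) → ι → ℂ} {r : ℝ} (hr : 0 < r)
    (hc : ContinuousOn h (Metric.closedBall 0 r)) (h₀ : h 0 = 0)
    (hs : ∀ z ∈ Metric.sphere (0 : ι → ℂ) r, h z ≠ 0)
    (happ : ∀ η > 0, ∀ i, ∃ P : MvPolynomial ι ℂ, ∀ z ∈ Metric.closedBall (0 : ι → ℂ) r,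
      ‖h z i - MvPolynomial.eval z P‖ ≤ η) :
    ∃ δ > 0, Metric.ball 0 δ ⊆ h '' Metric.closedBall 0 r := by
  obtain ⟨c, hc0, hcS⟩ := (isCompact_sphere (0 : ι → ℂ) r).exists_forall_le' (a := 0)
    (hc.norm.mono Metric.sphere_subset_closedBall) fun z hz => norm_pos_iff.2 (hs z hz)
  -- perturbed polynomial maps are open, hence cover the ball of radius `c / 2`
  have main : ∀ η > 0, η < c / 4 → ∀ y ∈ Metric.ball (0 : ι → ℂ) (c / 2),
      ∃ z ∈ Metric.closedBall (0 : ι → ℂ) r, ‖h z - y‖ ≤ η := by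
    intro η hη hηc y hy
    choose R hR using happ (η / 2) (half_pos hη)
    set N := ∑ i, (R i).totalDegree + 1 with hN
    have hRN : ∀ i, (R i).totalDegree < N := fun i => by
      rw [hN, Nat.lt_succ_iff]
      exact Finset.single_le_sum (f := fun i => (R i).totalDegree) (fun _ _ => Nat.zero_le _)
        (Finset.mem_univ i)
    set ε : ℝ := η / 2 / r ^ N with hε
    have hε0 : 0 < ε := by positivity
    set P : ι → MvPolynomial ι ℂ := fun i =>
      MvPolynomial.C (ε : ℂ) * MvPolynomial.X i ^ N + R i with hP
    have hfin := MvPolynomial.finite_adjoin_of_pow_add (P := P) (ε := (ε : ℂ))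
      (by exact_mod_cast hε0.ne') hRN fun i => rfl
    have hopen := (MvPolynomial.algebraicIndependent_of_isIntegral (P := P)).isOpenMap_eval
    set F : (ι → ℂ) → ι → ℂ := fun z i => MvPolynomial.eval z (P i) with hF
    have hFc : Continuous F := continuous_pi fun i => MvPolynomial.continuous_eval (P i)
    have hFh : ∀ z ∈ Metric.closedBall (0 : ι → ℂ) r, ‖h z - F z‖ ≤ η := by
      intro z hz
      refine (pi_norm_le_iff_of_nonneg hη.le).2 fun i => ?_
      have h1 : (h z - F z) i = (h z i - MvPolynomial.eval z (R i)) - ε * z i ^ N := by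
        simp [hF, hP]; ring
      have h2 : ‖z i‖ ^ N ≤ r ^ N := by
        gcongr
        exact (norm_le_pi_norm z i).trans (by simpa using hz)
      rw [h1]
      refine (norm_sub_le _ _).trans ?_
      have h3 : ‖(ε : ℂ) * z i ^ N‖ ≤ η / 2 := by
        rw [norm_mul, norm_pow, Complex.norm_real, Real.norm_of_nonneg hε0.le]
        calc ε * ‖z i‖ ^ N ≤ ε * r ^ N := by gcongr
          _ = η / 2 := by rw [hε]; field_simp
      linarith [hR i z hz]
    have hsub : Metric.ball (0 : ι → ℂ) (c / 2) ⊆ F '' Metric.ball 0 r := by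
      refine (convex_ball (0 : ι → ℂ) (c / 2)).isPreconnected.subset_of_closure_inter_subset
        (hopen _ Metric.isOpen_ball) ⟨F 0, ?_, 0, by simpa, rfl⟩ ?_
      · have := hFh 0 (by simp [hr.le])
        rw [h₀, zero_sub, norm_neg] at this
        rw [mem_ball_zero_iff]
        linarith
      · rintro w ⟨hw, hwb⟩
        have hcl : IsClosed (F '' Metric.closedBall 0 r) :=
          ((isCompact_closedBall _ _).image hFc).isClosed
        obtain ⟨z, hz, rfl⟩ := closure_minimal (Set.image_mono Metric.ball_subset_closedBall) hcl hw
        refine ⟨z, ?_, rfl⟩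
        by_contra hzb
        have hzs : z ∈ Metric.sphere (0 : ι → ℂ) r := by
          rw [Metric.mem_sphere]
          exact le_antisymm hz (not_lt.1 hzb)
        have h1 := hcS z hzs
        have h2 := hFh z hz
        have h3 := norm_sub_norm_le (h z) (F z)
        rw [mem_ball_zero_iff] at hwb
        linarith
    obtain ⟨z, hz, rfl⟩ := hsub hy
    exact ⟨z, Metric.ball_subset_closedBall hz, hFh z (Metric.ball_subset_closedBall hz)⟩
  refine ⟨c / 2, half_pos hc0, fun y hy => ?_⟩
  have hcl : IsClosed (h '' Metric.closedBall 0 r) :=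
    ((isCompact_closedBall _ _).image_of_continuousOn hc).isClosed
  rw [← hcl.closure_eq, Metric.mem_closure_iff]
  intro ε hε
  obtain ⟨z, hz, hzy⟩ := main (min (ε / 2) (c / 8)) (by positivity)
    ((min_le_right _ _).trans_lt (by linarith)) y hy
  refine ⟨h z, ⟨z, hz, rfl⟩, ?_⟩
  rw [dist_comm, dist_eq_norm]
  linarith [min_le_left (ε / 2) (c / 8)]

/-- The restriction of a multilinear form on `ℂ^ι` to the diagonal is a polynomial function. -/
theorem ContinuousMultilinearMap.exists_mvPolynomial_eval_diag {ι : Type*} [Fintype ι] {n : ℕ}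
    (f : ContinuousMultilinearMap ℂ (fun _ : Fin n => ι → ℂ) ℂ) :
    ∃ P : MvPolynomial ι ℂ, ∀ z, MvPolynomial.eval z P = f fun _ => z := by
  classical
  refine ⟨∑ s : Fin n → ι, (∏ k, MvPolynomial.X (s k)) *
    MvPolynomial.C (f fun k => Pi.single (s k) 1), fun z => ?_⟩
  have hz : z = ∑ i, z i • (Pi.single i 1 : ι → ℂ) := pi_eq_sum_univ' z
  conv_rhs => rw [hz]
  rw [f.map_sum, _root_.map_sum]
  refine Finset.sum_congr rfl fun s _ => ?_
  rw [f.map_smul_univ (fun k => z (s k)) fun k => Pi.single (s k) 1]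
  simp [map_prod]

/-- An analytic function is a uniform limit of polynomials near the origin. -/
theorem AnalyticAt.exists_ball_forall_exists_mvPolynomial {ι : Type*} [Fintype ι]
    {f : (ι → ℂ) → ℂ} (hf : AnalyticAt ℂ f 0) :
    ∃ ρ > 0, ∀ η > 0, ∃ P : MvPolynomial ι ℂ, ∀ z ∈ Metric.ball (0 : ι → ℂ) ρ,
      ‖f z - MvPolynomial.eval z P‖ ≤ η := by
  obtain ⟨p, r, hp⟩ := hf
  obtain ⟨ρ, hρ, hρr⟩ := ENNReal.lt_iff_exists_nnreal_btwn.1 hp.r_pos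
  refine ⟨ρ, by exact_mod_cast hρ, fun η hη => ?_⟩
  obtain ⟨n, hn⟩ :=
    (Metric.tendstoUniformlyOn_iff.1 (hp.tendstoUniformlyOn hρr) η hη).exists
  choose Q hQ using fun k => (p k).exists_mvPolynomial_eval_diag
  refine ⟨∑ k ∈ Finset.range n, Q k, fun z hz => ?_⟩
  have h := hn z hz
  rw [zero_add, dist_eq_norm, FormalMultilinearSeries.partialSum] at h
  simpa [hQ] using h.le

/-- A generic linear map `ℂ^ι → ℂ^κ` does not vanish on a compact set of small Hausdorff dimension,
except possibly at the origin. -/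
theorem exists_linearCombination_ne_zero_of_dimH_lt {ι κ : Type*} [Fintype ι] [Fintype κ]
    {Z : Set (ι → ℂ)} (hZ : IsCompact Z) (hdim : dimH Z < 2 * Fintype.card κ) :
    ∃ M : ι → κ → ℂ, ∀ v ∈ Z, v ≠ 0 → Fintype.linearCombination ℂ M v ≠ 0 := by
  classical
  let : MeasurableSpace (κ → ℂ) := borel _
  have : BorelSpace (κ → ℂ) := ⟨rfl⟩
  let : MeasurableSpace (ι → κ → ℂ) := borel _
  have : BorelSpace (ι → κ → ℂ) := ⟨rfl⟩
  have hrank : Module.finrank ℝ (κ → ℂ) = 2 * Fintype.card κ := by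
    simp [Module.finrank_pi_fintype, mul_comm]
  let μ : MeasureTheory.Measure (κ → ℂ) :=
    MeasureTheory.Measure.hausdorffMeasure (Module.finrank ℝ (κ → ℂ))
  let ν : MeasureTheory.Measure (ι → κ → ℂ) :=
    MeasureTheory.Measure.hausdorffMeasure (Module.finrank ℝ (ι → κ → ℂ))
  have key (j : ι) : ∀ᵐ M ∂ν, ∀ v ∈ Z, v j ≠ 0 → Fintype.linearCombination ℂ M v ≠ 0 := by
    have hmeas : MeasurableSet
        {M : ι → κ → ℂ | ∀ v ∈ Z, v j ≠ 0 → Fintype.linearCombination ℂ M v ≠ 0} := by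
      have hbad : {M : ι → κ → ℂ | ∀ v ∈ Z, v j ≠ 0 → Fintype.linearCombination ℂ M v ≠ 0} =
          (⋃ n : ℕ, Prod.snd '' {q : Z × (ι → κ → ℂ) | 1 / ((n : ℝ) + 1) ≤ ‖q.1.1 j‖ ∧
            Fintype.linearCombination ℂ q.2 q.1.1 = 0})ᶜ := by
        refine Set.ext fun M => ⟨fun h hM => ?_, fun h v hv hvj h0 => h ?_⟩
        · obtain ⟨n, q, ⟨h1, h2⟩, rfl⟩ := Set.mem_iUnion.1 hM
          refine h q.1.1 q.1.2 (fun h0 => ?_) h2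
          rw [h0, norm_zero] at h1
          exact h1.not_gt (by positivity)
        · obtain ⟨n, hn⟩ := exists_nat_one_div_lt (norm_pos_iff.2 hvj)
          exact Set.mem_iUnion.2 ⟨n, (⟨v, hv⟩, M), ⟨hn.le, h0⟩, rfl⟩
      rw [hbad]
      refine (MeasurableSet.iUnion fun n => IsClosed.measurableSet ?_).compl
      have := isCompact_iff_compactSpace.1 hZ
      refine isClosedMap_snd_of_compactSpace _ (IsClosed.inter ?_ ?_)
      · exact isClosed_le continuous_const
          ((continuous_apply j).comp (continuous_subtype_val.comp continuous_fst)).norm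
      · simp only [Fintype.linearCombination_apply]
        refine isClosed_eq (continuous_finsetSum _ fun k _ => ?_) continuous_const
        exact ((continuous_apply k).comp (continuous_subtype_val.comp continuous_fst)).smul
          ((continuous_apply k).comp continuous_snd)
    refine MeasureTheory.ae_mem_of_ae_add_linearMap_mem
      (LinearMap.single ℝ (fun _ : ι => κ → ℂ) j) μ ν hmeas fun y => ?_
    set φ : (ι → ℂ) → κ → ℂ := fun v => -((v j)⁻¹ • Fintype.linearCombination ℂ y v) with hφ
    have hφdim : dimH (φ '' (Z ∩ {v | v j ≠ 0})) < 2 * Fintype.card κ := by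
      refine lt_of_le_of_lt (dimH_image_le_of_locally_lipschitzOn fun v hv => ?_)
        ((dimH_mono Set.inter_subset_left).trans_lt hdim)
      have hcd : ContDiffAt ℂ 1 φ v := by
        simp only [hφ, Fintype.linearCombination_apply]
        have h1 : ContDiffAt ℂ 1 (fun v : ι → ℂ => (v j)⁻¹) v :=
          (contDiff_apply ℂ ℂ j).contDiffAt.inv hv.2
        refine (h1.smul (ContDiffAt.sum fun k _ => ?_)).neg
        exact (contDiff_apply ℂ ℂ k).contDiffAt.smul contDiffAt_const
      obtain ⟨K, t, ht, hK⟩ := hcd.exists_lipschitzOnWith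
      exact ⟨K, t, nhdsWithin_le_nhds ht, hK⟩
    have hnull : μ (φ '' (Z ∩ {v | v j ≠ 0})) = 0 := by
      have h1 : dimH (φ '' (Z ∩ {v | v j ≠ 0})) <
          ((Module.finrank ℝ (κ → ℂ) : NNReal) : ENNReal) := by
        rw [hrank]; push_cast; exact hφdim
      exact_mod_cast hausdorffMeasure_of_dimH_lt h1
    refine MeasureTheory.measure_mono_null (fun c hc => ?_) hnull
    obtain ⟨v, hv, hvj, h0⟩ : ∃ v ∈ Z, v j ≠ 0 ∧
        Fintype.linearCombination ℂ (y + Pi.single j c) v = 0 := by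
      by_contra! hcon
      exact hc hcon
    refine ⟨v, ⟨hv, hvj⟩, ?_⟩
    have h1 : Fintype.linearCombination ℂ (y + Pi.single j c) v =
        Fintype.linearCombination ℂ y v + v j • c := by
      simp only [Fintype.linearCombination_apply, Pi.add_apply, smul_add, Finset.sum_add_distrib]
      congr 1
      rw [Finset.sum_eq_single j] <;> simp +contextual [Pi.single_eq_of_ne]
    have h2 : Fintype.linearCombination ℂ y v = -(v j • c) := by
      rw [← add_eq_zero_iff_eq_neg, ← h1]; exact h0
    simp only [hφ, h2, smul_neg, neg_neg]
    rw [smul_smul, inv_mul_cancel₀ hvj, one_smul]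
  obtain ⟨M, hM⟩ := (MeasureTheory.ae_all_iff.2 key).exists
  refine ⟨M, fun v hv hv0 => ?_⟩
  obtain ⟨j, hj⟩ := Function.ne_iff.1 hv0
  exact hM j v hv hj

/-- Near a common zero of the analytic functions `f i`, `i ∈ I`, their zero locus has complex
dimension at least `card ι - card I`. -/
theorem le_dimH_zeroLocus_of_analyticAt {ι : Type*} [Fintype ι] [DecidableEq ι] (I : Finset ι)
    {f : ι → (ι → ℂ) → ℂ} {x : ι → ℂ} (hf : ∀ i ∈ I, AnalyticAt ℂ (f i) x)
    (hf₀ : ∀ i ∈ I, f i x = 0) {W : Set (ι → ℂ)} (hW : W ∈ nhds x) :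
    2 * (Fintype.card {i // i ∉ I} : ENNReal) ≤ dimH {v ∈ W | ∀ i ∈ I, f i v = 0} := by
  wlog hx : x = 0 generalizing f x W
  · have htend : Filter.Tendsto (fun u : ι → ℂ => x + u) (nhds 0) (nhds x) := by
      have : Continuous fun u : ι → ℂ => x + u := by fun_prop
      simpa using this.tendsto 0
    have h := this (f := fun i u => f i (x + u)) (x := 0)
      (fun i hi => AnalyticAt.fun_comp (by simpa using hf i hi) (by fun_prop))
      (by simpa using hf₀) (htend hW) rfl
    refine h.trans ?_
    rw [← (isometry_add_left x).dimH_image]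
    refine dimH_mono ?_
    rintro _ ⟨u, hu, rfl⟩
    exact hu
  subst hx
  by_contra! hlt
  have hana : ∀ᶠ v in nhds (0 : ι → ℂ), ∀ i ∈ I, AnalyticAt ℂ (f i) v :=
    (Filter.eventually_all_finset I).2 fun i hi => (hf i hi).eventually_analyticAt
  obtain ⟨R, hR, hRW⟩ := Metric.mem_nhds_iff.1 (Filter.inter_mem hW hana)
  choose! ρ hρ happ using fun i hi => (hf i hi).exists_ball_forall_exists_mvPolynomial
  obtain ⟨r, hr, hrR, hrρ⟩ : ∃ r > 0, r < R ∧ ∀ i ∈ I, r < ρ i := by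
    have h1 : ∀ᶠ r in nhdsWithin (0 : ℝ) (Set.Ioi 0), r < R ∧ ∀ i ∈ I, r < ρ i :=
      nhdsWithin_le_nhds ((eventually_lt_nhds hR).and
        ((Filter.eventually_all_finset I).2 fun i hi => eventually_lt_nhds (hρ i hi)))
    obtain ⟨r, h2, h3⟩ := (h1.and self_mem_nhdsWithin).exists
    exact ⟨r, h3, h2.1, h2.2⟩
  have hball : Metric.closedBall (0 : ι → ℂ) r ⊆ W ∩ {v | ∀ i ∈ I, AnalyticAt ℂ (f i) v} :=
    (Metric.closedBall_subset_ball hrR).trans hRW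
  have hfc : ∀ i ∈ I, ContinuousOn (f i) (Metric.closedBall 0 r) := fun i hi v hv =>
    ((hball hv).2 i hi).continuousAt.continuousWithinAt
  set Z : Set (ι → ℂ) := {v ∈ Metric.closedBall 0 r | ∀ i ∈ I, f i v = 0} with hZdef
  have hZ : IsCompact Z := by
    refine (isCompact_closedBall (0 : ι → ℂ) r).of_isClosed_subset ?_ fun v hv => hv.1
    have hZeq : Z = Metric.closedBall 0 r ∩
        ⋂ i ∈ I, (Metric.closedBall 0 r ∩ f i ⁻¹' {0}) := by
      ext v
      constructor
      · exact fun h => ⟨h.1, Set.mem_iInter₂.2 fun i hi => ⟨h.1, h.2 i hi⟩⟩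
      · exact fun h => ⟨h.1, fun i hi => (Set.mem_iInter₂.1 h.2 i hi).2⟩
    rw [hZeq]
    exact Metric.isClosed_closedBall.inter (isClosed_biInter fun i hi =>
      (hfc i hi).preimage_isClosed_of_isClosed Metric.isClosed_closedBall isClosed_singleton)
  have hZW : Z ⊆ {v ∈ W | ∀ i ∈ I, f i v = 0} := fun v hv => ⟨(hball hv.1).1, hv.2⟩
  have hZdim : dimH Z < 2 * Fintype.card {i // i ∉ I} := (dimH_mono hZW).trans_lt hlt
  obtain ⟨M, hM⟩ := exists_linearCombination_ne_zero_of_dimH_lt hZ hZdim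
  set L := Fintype.linearCombination ℂ M with hL
  set h : (ι → ℂ) → ι → ℂ := fun v i => if hi : i ∈ I then f i v else L v ⟨i, hi⟩ with hh
  have hLc : Continuous L := L.continuous_of_finiteDimensional
  obtain ⟨δ, hδ, hδsub⟩ := exists_ball_subset_image_of_polynomial_approx (h := h) hr
    (by
      refine continuousOn_pi.2 fun i => ?_
      by_cases hi : i ∈ I
      · simpa [hh, hi] using hfc i hi
      · simp only [hh, hi, dite_false]
        exact ((continuous_apply _).comp hLc).continuousOn)
    (by
      funext i
      by_cases hi : i ∈ I <;> simp [hh, hi, hf₀])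
    (by
      intro v hv h0
      have hvne : v ≠ 0 := ne_zero_of_mem_sphere hr.ne' ⟨v, hv⟩
      refine hM v ⟨Metric.sphere_subset_closedBall hv, fun i hi => ?_⟩ hvne ?_
      · simpa [hh, hi] using congrFun h0 i
      · funext ⟨i, hi⟩
        simpa [hh, hi] using congrFun h0 i)
    (by
      intro η hη i
      by_cases hi : i ∈ I
      · obtain ⟨P, hP⟩ := happ i hi η hη
        refine ⟨P, fun z hz => ?_⟩
        simpa [hh, hi] using hP z (Metric.closedBall_subset_ball (hrρ i hi) hz)
      · refine ⟨∑ k, MvPolynomial.X k * MvPolynomial.C (M k ⟨i, hi⟩), fun z _ => ?_⟩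
        simp [hh, hi, hL, Fintype.linearCombination_apply, hη.le])
  have hcover : Metric.ball (0 : {i // i ∉ I} → ℂ) δ ⊆ L '' Z := by
    intro c hc
    obtain ⟨v, hv, hvc⟩ := hδsub (a := fun i => if hi : i ∈ I then 0 else c ⟨i, hi⟩) (by
      rw [mem_ball_zero_iff, pi_norm_lt_iff hδ] at hc ⊢
      intro i
      by_cases hi : i ∈ I
      · simpa [hi] using hδ
      · simpa [hi] using hc ⟨i, hi⟩)
    refine ⟨v, ⟨hv, fun i hi => ?_⟩, ?_⟩
    · simpa [hh, hi] using congrFun hvc i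
    · funext ⟨i, hi⟩
      simpa [hh, hi] using congrFun hvc i
  have h1 : dimH (Metric.ball (0 : {i // i ∉ I} → ℂ) δ) =
      (2 * Fintype.card {i // i ∉ I} : ENNReal) := by
    rw [Real.dimH_of_mem_nhds (Metric.ball_mem_nhds _ hδ)]
    simp [Module.finrank_pi_fintype, mul_comm]
  have h2 : dimH (L '' Z) ≤ dimH Z := (LinearMap.toContinuousLinearMap L).lipschitz.dimH_image_le Z
  exact (h1.symm.le.trans (dimH_mono hcover)).not_gt (h2.trans_lt hZdim)

/-- Corollary 2.4: let `ω = Σ_i b_i dx_i` be a holomorphic 1-form on a connected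
open `U ⊆ ℂ^ℓ`.  If the intersection of `V(ψ)` over all holomorphic `p`-forms
`ψ` with `ω ∧ ψ = 0` is empty, then every irreducible component of `V(ω)` has
codimension at most `p`: every point of `V(ω)` has local (Hausdorff) dimension
at least `2(ℓ−p)` in every neighborhood. -/
theorem stmt_3 (ℓ p : ℕ) (U : Set (Fin ℓ → ℂ)) (hUo : IsOpen U) (hUc : IsConnected U)
    (b : Fin ℓ → (Fin ℓ → ℂ) → ℂ)
    (hb : ∀ i, AnalyticOnNhd ℂ (b i) U)
    (hEmpty :
      (⋂ A ∈ {A : Finset (Fin ℓ) → (Fin ℓ → ℂ) → ℂ |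
          (∀ I : Finset (Fin ℓ), I.card = p → AnalyticOnNhd ℂ (A I) U) ∧
          (∀ J : Finset (Fin ℓ), J.card = p + 1 → ∀ x ∈ U,
            ∑ i ∈ J, (-1 : ℂ) ^ (J.filter (· < i)).card *
              (b i x * A (J.erase i) x) = 0)},
        {x ∈ U | ∀ I : Finset (Fin ℓ), I.card = p → A I x = 0}) = ∅) :
    ∀ x ∈ {x ∈ U | ∀ i, b i x = 0}, ∀ W ∈ nhds x,
      ENNReal.ofReal (2 * (ℓ : ℝ) - 2 * p) ≤
        dimH ({x ∈ U | ∀ i, b i x = 0} ∩ W) := by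
  rintro x ⟨hxU, hbx⟩ W hW
  obtain ⟨A, ⟨hA, hrel⟩, I, hI, hAI⟩ : ∃ A : Finset (Fin ℓ) → (Fin ℓ → ℂ) → ℂ,
      ((∀ I : Finset (Fin ℓ), I.card = p → AnalyticOnNhd ℂ (A I) U) ∧
        (∀ J : Finset (Fin ℓ), J.card = p + 1 → ∀ x ∈ U,
          ∑ i ∈ J, (-1 : ℂ) ^ (J.filter (· < i)).card * (b i x * A (J.erase i) x) = 0)) ∧
      ∃ I : Finset (Fin ℓ), I.card = p ∧ A I x ≠ 0 := by
    by_contra! hcon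
    refine (Set.eq_empty_iff_forall_notMem.1 hEmpty x) (Set.mem_iInter₂.2 fun A hA => ?_)
    exact ⟨hxU, hcon A hA⟩
  have hne : ∀ᶠ y in nhds x, A I y ≠ 0 :=
    (hA I hI x hxU).continuousAt.eventually_ne hAI
  have hV : ∀ y ∈ U, A I y ≠ 0 → (∀ i ∈ I, b i y = 0) → ∀ i, b i y = 0 := by
    intro y hy hAy hby j
    by_cases hj : j ∈ I
    · exact hby j hj
    have h := hrel (insert j I) (by rw [Finset.card_insert_of_notMem hj, hI]) y hy
    rw [Finset.sum_insert hj, Finset.erase_insert hj,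
      Finset.sum_eq_zero fun i hi => by rw [hby i hi]; ring, add_zero] at h
    simpa [hAy] using h
  have key := le_dimH_zeroLocus_of_analyticAt I (fun i _ => hb i x hxU) (fun i _ => hbx i)
    (Filter.inter_mem (Filter.inter_mem hW (hUo.mem_nhds hxU)) hne)
  refine (le_trans ?_ key).trans (dimH_mono ?_)
  · have hcard : Fintype.card {i // i ∉ I} = ℓ - p := by
      rw [Fintype.card_subtype_compl, Fintype.card_fin, Fintype.card_coe, hI]
    have hpl : p ≤ ℓ := by simpa [hI] using I.card_le_univ
    rw [hcard, ← mul_sub, ← Nat.cast_sub hpl, ENNReal.ofReal_mul (by norm_num)]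
    simp
  · rintro y ⟨⟨⟨hyW, hyU⟩, hAy⟩, hby⟩
    exact ⟨⟨hyU, hV y hyU hAy hby⟩, hyW⟩
end
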